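/- Let K be a field of characteristic different from 2 and let q₁, q₂, q₃ be covariants of binary octics over K, each of order 2, of degrees d₁, d₂, d₃ and weights 4d₁−1, 4d₂−1, 4d₃−1 respectively (the weight of a nonzero order-2 covariant of octics of degree d is necessarily 4d−1). Then for every binary octic f ∈ K[x,z] with f(−x,z) = f(x,z) — in particular for f = x⁸ + a·x⁶z² + b·x⁴z⁴ + c·x²z⁶ + z⁸, the normal model of genus-3 hyperelliptic curves whose automorphism group contains the dihedral group D₄ of order 4 — each q_i(f) is a scalar multiple of the monomial xz, and consequently R(q₁(f), q₂(f), q₃(f)) = 0. -/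

import Mathlib

open MvPolynomial

/-- The action of a matrix `M` on binary forms: `(M.f)(x,z) = f(M⁻¹·(x,z))`. -/
noncomputable def matAct {K : Type*} [Field K] (M : Matrix (Fin 2) (Fin 2) K)
    (f : MvPolynomial (Fin 2) K) : MvPolynomial (Fin 2) K :=
  bind₁ (fun j : Fin 2 => C (M⁻¹ j 0) * X 0 + C (M⁻¹ j 1) * X 1) f

/-- Substitution of `M·(x,z)` for `(x,z)` in a binary form: `(subst M p)(x,z) = p(M·(x,z))`. -/
noncomputable def subst {K : Type*} [Field K] (M : Matrix (Fin 2) (Fin 2) K)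
    (p : MvPolynomial (Fin 2) K) : MvPolynomial (Fin 2) K :=
  bind₁ (fun j : Fin 2 => C (M j 0) * X 0 + C (M j 1) * X 1) p

/-- The determinant `R(q₁,q₂,q₃)` of three binary quadratic forms in the basis `x², xz, z²`. -/
noncomputable def Rdet {K : Type*} [CommRing K] (q₁ q₂ q₃ : MvPolynomial (Fin 2) K) : K :=
  Matrix.det
    !![coeff (Finsupp.single 0 2) q₁, coeff (Finsupp.single 0 1 + Finsupp.single 1 1) q₁,
         coeff (Finsupp.single 1 2) q₁;
       coeff (Finsupp.single 0 2) q₂, coeff (Finsupp.single 0 1 + Finsupp.single 1 1) q₂,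
         coeff (Finsupp.single 1 2) q₂;
       coeff (Finsupp.single 0 2) q₃, coeff (Finsupp.single 0 1 + Finsupp.single 1 1) q₃,
         coeff (Finsupp.single 1 2) q₃]

/-- A covariant of binary octics of degree `d` and order `2`, with weight `4d−1`:
`q` sends octics to quadratics, is homogeneous of degree `d` in the coefficients, and
satisfies `q(M.f)(M·(x,z)) = det(M)^{−(4d−1)}·q(f)(x,z)` for all `M ∈ GL₂(K)`. -/
structure OrderTwoCovariant (K : Type*) [Field K] (d : ℕ)
    (q : MvPolynomial (Fin 2) K → MvPolynomial (Fin 2) K) : Prop where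
  order : ∀ f : MvPolynomial (Fin 2) K, f.IsHomogeneous 8 → (q f).IsHomogeneous 2
  degree : ∀ (c : K) (f : MvPolynomial (Fin 2) K), f.IsHomogeneous 8 →
    q (C c * f) = C (c ^ d) * q f
  covariance : ∀ M : Matrix (Fin 2) (Fin 2) K, IsUnit M.det →
    ∀ f : MvPolynomial (Fin 2) K, f.IsHomogeneous 8 →
      subst M (q (matAct M f)) = C (M.det ^ (-(4 * (d : ℤ) - 1))) * q f

/-!
The reflection `x ↦ -x` has determinant `-1` and the weight `4d - 1` is odd, so a reflection fixing
`f` changes the sign of `q f`. A quadratic form that is odd in `x` is a multiple of `xz`, and the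
multiples of `xz` span only a line in the three-dimensional space of quadratic forms.
-/

section Monomials

variable {R : Type*} [CommSemiring R]

theorem bind₁_C_mul_X_monomial {σ : Type*} (a : σ → R) (m : σ →₀ ℕ) (r : R) :
    bind₁ (fun i => C (a i) * X i) (monomial m r) =
      monomial m ((m.prod fun i k => a i ^ k) * r) := by
  simp only [bind₁_monomial, mul_pow, Finset.prod_mul_distrib, ← C_pow, ← map_prod]
  rw [monomial_eq (s := m), C_mul, Finsupp.prod, Finsupp.prod]
  ring

theorem coeff_bind₁_C_mul_X {σ : Type*} (a : σ → R) (p : MvPolynomial σ R) (m : σ →₀ ℕ) :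
    coeff m (bind₁ (fun i => C (a i) * X i) p) = (m.prod fun i k => a i ^ k) * coeff m p := by
  classical
  induction p using MvPolynomial.induction_on' with
  | monomial n r =>
    rw [bind₁_C_mul_X_monomial, coeff_monomial, coeff_monomial]
    split_ifs with h
    · rw [h]
    · rw [mul_zero]
  | add p q hp hq => rw [map_add, coeff_add, coeff_add, hp, hq, mul_add]

theorem single_zero_add_single_one_eq_iff {i j : ℕ} {m : Fin 2 →₀ ℕ} :
    Finsupp.single 0 i + Finsupp.single 1 j = m ↔ (i, j) = (m 0, m 1) := by
  simp [Finsupp.ext_iff, Fin.forall_fin_two]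

theorem eq_sum_antidiagonal_of_isHomogeneous {p : MvPolynomial (Fin 2) R} {n : ℕ}
    (hp : p.IsHomogeneous n) :
    p = ∑ ij ∈ Finset.HasAntidiagonal.antidiagonal n,
      monomial (Finsupp.single 0 ij.1 + Finsupp.single 1 ij.2)
        (coeff (Finsupp.single 0 ij.1 + Finsupp.single 1 ij.2) p) := by
  ext m
  simp only [coeff_sum, coeff_monomial, single_zero_add_single_one_eq_iff, Prod.mk.eta,
    Finset.sum_ite_eq', Finset.HasAntidiagonal.mem_antidiagonal]
  split_ifs with hm
  · rw [single_zero_add_single_one_eq_iff.mpr rfl]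
  · exact hp.coeff_eq_zero (by rwa [Finsupp.degree_eq_sum, Fin.sum_univ_two])

theorem eq_C_mul_X_mul_X_of_isHomogeneous_two {p : MvPolynomial (Fin 2) R}
    (hp : p.IsHomogeneous 2) (hxx : coeff (Finsupp.single 0 2) p = 0)
    (hzz : coeff (Finsupp.single 1 2) p = 0) :
    p = C (coeff (Finsupp.single 0 1 + Finsupp.single 1 1) p) * (X 0 * X 1) := by
  have hsum := eq_sum_antidiagonal_of_isHomogeneous hp
  simpa [Finset.Nat.antidiagonal_succ, hxx, hzz, monomial_fin_two, mul_assoc] using hsum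

end Monomials

section Reflection

/-- The reflection `(x, z) ↦ (-x, z)` of the plane, as a matrix. -/
def xReflection (R : Type*) [Ring R] : Matrix (Fin 2) (Fin 2) R :=
  Matrix.diagonal ![-1, 1]

theorem det_xReflection {R : Type*} [CommRing R] : (xReflection R).det = -1 := by
  simp [xReflection]

theorem inv_xReflection {R : Type*} [CommRing R] : (xReflection R)⁻¹ = xReflection R := by
  refine Matrix.inv_eq_right_inv ?_
  rw [xReflection, Matrix.diagonal_mul_diagonal, ← Matrix.diagonal_one]
  congr 1
  ext i
  fin_cases i <;> simp

variable {K : Type*} [Field K]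

theorem matAct_eq_subst_inv (M : Matrix (Fin 2) (Fin 2) K) (p : MvPolynomial (Fin 2) K) :
    matAct M p = subst M⁻¹ p :=
  rfl

theorem subst_diagonal (a : Fin 2 → K) (p : MvPolynomial (Fin 2) K) :
    subst (Matrix.diagonal a) p = bind₁ (fun i => C (a i) * X i) p := by
  rw [subst]
  congr 2
  ext1 i
  fin_cases i <;> simp

theorem coeff_subst_xReflection (p : MvPolynomial (Fin 2) K) (m : Fin 2 →₀ ℕ) :
    coeff m (subst (xReflection K) p) = (-1) ^ m 0 * coeff m p := by
  rw [xReflection, subst_diagonal, coeff_bind₁_C_mul_X,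
    Finsupp.prod_fintype _ _ fun _ => pow_zero _]
  simp

theorem matAct_xReflection (p : MvPolynomial (Fin 2) K) :
    matAct (xReflection K) p = bind₁ (fun j : Fin 2 => if j = 0 then -(X 0) else X 1) p := by
  rw [matAct_eq_subst_inv, inv_xReflection, xReflection, subst_diagonal]
  congr 2
  ext1 i
  fin_cases i <;> simp

theorem coeff_eq_zero_of_subst_xReflection_eq_neg (h2 : (2 : K) ≠ 0) {p : MvPolynomial (Fin 2) K}
    (hp : subst (xReflection K) p = -p) {m : Fin 2 →₀ ℕ} (hm : Even (m 0)) :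
    coeff m p = 0 := by
  have hneg : coeff m p = -coeff m p := by
    rw [← coeff_neg, ← hp, coeff_subst_xReflection, hm.neg_one_pow, one_mul]
  have htwo : 2 * coeff m p = 0 := by linear_combination hneg
  exact (mul_eq_zero.mp htwo).resolve_left h2

end Reflection

namespace OrderTwoCovariant

variable {K : Type*} [Field K] {d : ℕ} {q : MvPolynomial (Fin 2) K → MvPolynomial (Fin 2) K}
  {f : MvPolynomial (Fin 2) K}

theorem subst_eq_neg_of_det_eq_neg_one (hq : OrderTwoCovariant K d q) (hf : f.IsHomogeneous 8)
    {M : Matrix (Fin 2) (Fin 2) K} (hM : M.det = -1) (hfix : matAct M f = f) :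
    subst M (q f) = -q f := by
  have hweight : Odd (-(4 * (d : ℤ) - 1)) := ⟨-2 * d, by ring⟩
  have hcov := hq.covariance M (by simp [hM]) f hf
  rwa [hfix, hM, hweight.neg_one_zpow, C_neg, C_1, neg_one_mul] at hcov

theorem exists_eq_C_mul_X_mul_X (hq : OrderTwoCovariant K d q) (h2 : (2 : K) ≠ 0)
    (hf : f.IsHomogeneous 8) (hfix : matAct (xReflection K) f = f) :
    ∃ c : K, q f = C c * (X 0 * X 1) := by
  have hneg : subst (xReflection K) (q f) = -q f :=
    hq.subst_eq_neg_of_det_eq_neg_one hf det_xReflection hfix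
  have hxx : coeff (Finsupp.single 0 2) (q f) = 0 :=
    coeff_eq_zero_of_subst_xReflection_eq_neg h2 hneg (by simp)
  have hzz : coeff (Finsupp.single 1 2) (q f) = 0 :=
    coeff_eq_zero_of_subst_xReflection_eq_neg h2 hneg (by simp)
  exact ⟨_, eq_C_mul_X_mul_X_of_isHomogeneous_two (hq.order f hf) hxx hzz⟩

end OrderTwoCovariant

theorem Rdet_C_mul_X_mul_X {R : Type*} [CommRing R] (a b c : R) :
    Rdet (C a * (X 0 * X 1)) (C b * (X 0 * X 1)) (C c * (X 0 * X 1)) = 0 := by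
  have hxx (r : R) :
      coeff (Finsupp.single 0 2) (C r * (X 0 * X 1) : MvPolynomial (Fin 2) R) = 0 := by
    rw [coeff_C_mul, coeff_mul_X', if_neg (by simp), mul_zero]
  refine Matrix.det_eq_zero_of_column_eq_zero 0 fun i => ?_
  fin_cases i <;> exact hxx _

/-- If `q₁, q₂, q₃` are order-2 covariants of binary octics of degrees `d₁, d₂, d₃` (hence of
odd weights `4dᵢ−1`), then for every binary octic `f` with `f(−x,z) = f(x,z)` — in particular
for the normal model `x⁸+ax⁶+bx⁴+cx²+1` of curves whose automorphism group contains `D₄` —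
each `qᵢ(f)` is a scalar multiple of `xz`, and consequently `R(q₁(f),q₂(f),q₃(f)) = 0`. -/
theorem statement11 {K : Type*} [Field K] (hchar : (2 : K) ≠ 0)
    (d₁ d₂ d₃ : ℕ)
    (q₁ q₂ q₃ : MvPolynomial (Fin 2) K → MvPolynomial (Fin 2) K)
    (hq₁ : OrderTwoCovariant K d₁ q₁) (hq₂ : OrderTwoCovariant K d₂ q₂)
    (hq₃ : OrderTwoCovariant K d₃ q₃)
    (f : MvPolynomial (Fin 2) K) (hf : f.IsHomogeneous 8)
    (hsym : bind₁ (fun j : Fin 2 => if j = 0 then -(X 0) else X 1) f = f) :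
    ((∃ c : K, q₁ f = C c * (X 0 * X 1)) ∧ (∃ c : K, q₂ f = C c * (X 0 * X 1)) ∧
      (∃ c : K, q₃ f = C c * (X 0 * X 1))) ∧
      Rdet (q₁ f) (q₂ f) (q₃ f) = 0 := by
  rw [← matAct_xReflection] at hsym
  obtain ⟨c₁, h₁⟩ := hq₁.exists_eq_C_mul_X_mul_X hchar hf hsym
  obtain ⟨c₂, h₂⟩ := hq₂.exists_eq_C_mul_X_mul_X hchar hf hsym
  obtain ⟨c₃, h₃⟩ := hq₃.exists_eq_C_mul_X_mul_X hchar hf hsym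
  refine ⟨⟨⟨c₁, h₁⟩, ⟨c₂, h₂⟩, ⟨c₃, h₃⟩⟩, ?_⟩
  rw [h₁, h₂, h₃, Rdet_C_mul_X_mul_X]
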